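/- Let φ : Γ₁ → Γ₂ be a finite flat morphism of degree n between graphs and F a field. Define F-linear maps T_V : V(Γ₂,F) → V(Γ₁,F) by T_V(v') = Σ_{v ∈ φ_V^{-1}(v')} n_v · v and T : E(Γ₂,F) → E(Γ₁,F) by T(e') = Σ_{e ∈ φ_E^{-1}(e')} n_e · e (the latter well defined since n_{ē} = n_e and φ_E(ē) = φ_E(e)‾). Then d ∘ T = T_V ∘ d. Consequently T maps H_1(Γ₂,F) = Ker(d) into H_1(Γ₁,F), and so defines an F-linear map φ^* : H_1(Γ₂,F) → H_1(Γ₁,F). -/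

import Mathlib

/-- A graph: a finite directed multigraph with a fixed-point-free orientation-reversing
involution `bar` on the set of oriented edges. -/
structure BarGraph where
  V : Type
  E : Type
  [fintV : Fintype V]
  [fintE : Fintype E]
  [decV : DecidableEq V]
  [decE : DecidableEq E]
  s : E → V
  t : E → V
  bar : E → E
  bar_ne : ∀ e, bar e ≠ e
  bar_bar : ∀ e, bar (bar e) = e
  s_bar : ∀ e, s (bar e) = t e
  t_bar : ∀ e, t (bar e) = s e

attribute [instance] BarGraph.fintV BarGraph.fintE BarGraph.decV BarGraph.decE

/-- `V(Γ,F)`: the `F`-vector space with basis the vertices of `Γ`. -/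
abbrev BarGraph.VVec (Γ : BarGraph) (F : Type) [Field F] : Type := Γ.V → F

/-- The subspace of relations `ē = -e`, i.e. spanned by the elements `e + ē`. -/
def BarGraph.rel (Γ : BarGraph) (F : Type) [Field F] : Submodule F (Γ.E → F) :=
  Submodule.span F {x | ∃ e : Γ.E, x = Pi.single e 1 + Pi.single (Γ.bar e) 1}

/-- `E(Γ,F)`: the quotient of the `F`-vector space with basis the oriented edges of `Γ`
by the relations `ē = -e`. -/
abbrev BarGraph.EVec (Γ : BarGraph) (F : Type) [Field F] : Type := (Γ.E → F) ⧸ Γ.rel F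

/-- The class of an oriented edge `e` in `E(Γ,F)`. -/
def BarGraph.edgeCls (Γ : BarGraph) (F : Type) [Field F] (e : Γ.E) : Γ.EVec F :=
  Submodule.Quotient.mk (Pi.single e 1)

/-- The boundary map on the free module: `e ↦ t(e) - s(e)`. -/
def BarGraph.d0 (Γ : BarGraph) (F : Type) [Field F] : (Γ.E → F) →ₗ[F] Γ.VVec F :=
  ∑ e : Γ.E, (LinearMap.proj e : (Γ.E → F) →ₗ[F] F).smulRight
    (Pi.single (Γ.t e) 1 - Pi.single (Γ.s e) 1)

lemma BarGraph.d0_single (Γ : BarGraph) (F : Type) [Field F] (e : Γ.E) :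
    Γ.d0 F (Pi.single e 1) = Pi.single (Γ.t e) 1 - Pi.single (Γ.s e) 1 := by
  classical
  simp only [BarGraph.d0, LinearMap.sum_apply, LinearMap.smulRight_apply, LinearMap.proj_apply]
  rw [Finset.sum_eq_single e]
  · simp
  · intro b _ hb
    rw [Pi.single_eq_of_ne hb, zero_smul]
  · simp

/-- The map `d : E(Γ,F) → V(Γ,F)`, `e ↦ t(e) - s(e)`. -/
def BarGraph.dMap (Γ : BarGraph) (F : Type) [Field F] : Γ.EVec F →ₗ[F] Γ.VVec F :=
  Submodule.liftQ (Γ.rel F) (Γ.d0 F) (by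
    rw [BarGraph.rel, Submodule.span_le]
    rintro x ⟨e, rfl⟩
    simp only [SetLike.mem_coe, LinearMap.mem_ker, map_add, BarGraph.d0_single,
      Γ.s_bar, Γ.t_bar]
    abel)

lemma BarGraph.dMap_edgeCls (Γ : BarGraph) (F : Type) [Field F] (e : Γ.E) :
    Γ.dMap F (Γ.edgeCls F e) = Pi.single (Γ.t e) 1 - Pi.single (Γ.s e) 1 := by
  simpa [BarGraph.dMap, BarGraph.edgeCls] using Γ.d0_single F e

/-- The map `δ : V(Γ,F) → E(Γ,F)`, `v ↦ ∑_{e : t(e) = v} e`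
(the class of the function `e ↦ g (t e)` for `g ∈ V(Γ,F)`). -/
def BarGraph.deltaMap (Γ : BarGraph) (F : Type) [Field F] : Γ.VVec F →ₗ[F] Γ.EVec F :=
  (Γ.rel F).mkQ ∘ₗ LinearMap.funLeft F F Γ.t

lemma BarGraph.deltaMap_single (Γ : BarGraph) (F : Type) [Field F] (v : Γ.V) :
    Γ.deltaMap F (Pi.single v 1) =
      ∑ e ∈ Finset.univ.filter (fun e => Γ.t e = v), Γ.edgeCls F e := by
  classical
  simp only [BarGraph.deltaMap, LinearMap.coe_comp, Function.comp_apply, BarGraph.edgeCls,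
    ← Submodule.mkQ_apply]
  rw [← map_sum]
  congr 1
  funext e
  rw [Finset.sum_apply, Finset.sum_filter]
  simp only [LinearMap.funLeft_apply]
  have key : ∀ e' : Γ.E, (if Γ.t e' = v then ((Pi.single e' (1:F) : Γ.E → F) e) else 0)
      = (if e' = e then (if Γ.t e = v then (1:F) else 0) else 0) := by
    intro e'
    by_cases h1 : e' = e <;> by_cases h2 : Γ.t e' = v <;> simp_all [Pi.single_apply]
  rw [Finset.sum_congr rfl (fun e' _ => key e'),
    Finset.sum_ite_eq' Finset.univ e (fun _ => if Γ.t e = v then (1:F) else 0)]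
  simp [Pi.single_apply]
/-- A cycle in a graph `Γ`: a nonempty closed walk, encoded as a cyclically indexed
sequence of oriented edges `seq : ZMod len → Γ.E` with `t (seq i) = s (seq (i+1))`. -/
structure GraphCycle (Γ : BarGraph) where
  len : ℕ
  len_pos : 0 < len
  seq : ZMod len → Γ.E
  closed : ∀ i, Γ.t (seq i) = Γ.s (seq (i + 1))

/-- The class `e₁ + ⋯ + e_m ∈ E(Γ,F)` of a cycle. -/
def GraphCycle.cls {Γ : BarGraph} (R : GraphCycle Γ) (F : Type) [Field F] : Γ.EVec F :=
  haveI : NeZero R.len := ⟨R.len_pos.ne'⟩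
  ∑ i : ZMod R.len, Γ.edgeCls F (R.seq i)

/-- The multiplicity `m_R(e)`: the number of times the cycle `R` traverses the
oriented edge `e`. -/
def GraphCycle.mult {Γ : BarGraph} (R : GraphCycle Γ) (e : Γ.E) : ℕ :=
  haveI : NeZero R.len := ⟨R.len_pos.ne'⟩
  (Finset.univ.filter (fun i : ZMod R.len => R.seq i = e)).card

/-- The set of oriented edges traversed by a cycle. -/
def GraphCycle.edgeSet {Γ : BarGraph} (R : GraphCycle Γ) : Set Γ.E :=
  {e | ∃ i, R.seq i = e}

/-- The set of vertices visited by a cycle. -/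
def GraphCycle.vertexSet {Γ : BarGraph} (R : GraphCycle Γ) : Set Γ.V :=
  {v | ∃ i, Γ.s (R.seq i) = v}

/-- The cycle obtained by traversing `R` `d` consecutive times. -/
def GraphCycle.pow {Γ : BarGraph} (R : GraphCycle Γ) (d : ℕ) (hd : 0 < d) : GraphCycle Γ where
  len := d * R.len
  len_pos := Nat.mul_pos hd R.len_pos
  seq := fun i => R.seq (ZMod.castHom (dvd_mul_left R.len d) (ZMod R.len) i)
  closed := fun i => by rw [map_add, map_one]; exact R.closed _

/-- Two cycles coincide up to cyclic rotation. -/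
def CyclicRotation {Γ : BarGraph} (C D : GraphCycle Γ) : Prop :=
  C.len = D.len ∧ ∃ k : ℕ, ∀ j : ℕ, C.seq (j : ZMod C.len) = D.seq ((j + k : ℕ) : ZMod D.len)

/-- A finite flat morphism of degree `n` between graphs. -/
structure FFMor (Γ₁ Γ₂ : BarGraph) (n : ℕ) where
  vMap : Γ₁.V → Γ₂.V
  eMap : Γ₁.E → Γ₂.E
  vMap_surj : Function.Surjective vMap
  eMap_surj : Function.Surjective eMap
  s_comm : ∀ e, vMap (Γ₁.s e) = Γ₂.s (eMap e)
  t_comm : ∀ e, vMap (Γ₁.t e) = Γ₂.t (eMap e)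
  bar_comm : ∀ e, eMap (Γ₁.bar e) = Γ₂.bar (eMap e)
  vMult : Γ₁.V → ℕ
  eMult : Γ₁.E → ℕ
  vMult_pos : ∀ v, 0 < vMult v
  eMult_pos : ∀ e, 0 < eMult e
  eMult_bar : ∀ e, eMult (Γ₁.bar e) = eMult e
  fiber_s_surj : ∀ e' : Γ₂.E, ∀ v : Γ₁.V, vMap v = Γ₂.s e' →
    ∃ e : Γ₁.E, eMap e = e' ∧ Γ₁.s e = v
  sum_fiber : ∀ e' : Γ₂.E,
    ∑ e ∈ Finset.univ.filter (fun e => eMap e = e'), eMult e = n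
  sum_fiber_source : ∀ e' : Γ₂.E, ∀ v : Γ₁.V, vMap v = Γ₂.s e' →
    ∑ e ∈ Finset.univ.filter (fun e => eMap e = e' ∧ Γ₁.s e = v), eMult e = vMult v

/-- The image closed walk `φ(R)` of a cycle `R` under a finite flat morphism `φ`. -/
def FFMor.mapCycle {Γ₁ Γ₂ : BarGraph} {n : ℕ} (φ : FFMor Γ₁ Γ₂ n) (R : GraphCycle Γ₁) :
    GraphCycle Γ₂ where
  len := R.len
  len_pos := R.len_pos
  seq := fun i => φ.eMap (R.seq i)
  closed := fun i => by rw [← φ.t_comm, R.closed, φ.s_comm]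

/-!
On functions, both `T_V` and `T` are weighted pullbacks: `T_V g` is `v ↦ n_v g(φ v)`, and `T` is
induced by `f ↦ (e ↦ n_e f(φ e))`. Pushing the weighted fiber above `e'` forward along `s` spreads
it over the vertices above `s(e')`, and flatness says that each such `v` receives exactly `n_v`:
this is the base change identity for the source map. Reversing edges gives the same identity for
the target map, and subtracting the two gives `d ∘ T = T_V ∘ d`.
-/

section WeightedPullback

variable {R α β γ δ : Type*} [CommSemiring R]

/-- The pullback `g ↦ (a ↦ w a * g (f a))` of functions along `f` with weight `w`. In terms of basis
vectors it sends `b` to the weighted fiber `∑_{f a = b} w a • a`. -/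
def weightedPullback (f : α → β) (w : α → R) : (β → R) →ₗ[R] (α → R) :=
  LinearMap.mulLeft R w ∘ₗ LinearMap.funLeft R R f

lemma weightedPullback_apply (f : α → β) (w : α → R) (g : β → R) (a : α) :
    weightedPullback f w g a = w a * g (f a) :=
  rfl

lemma weightedPullback_single [Fintype α] [DecidableEq α] [DecidableEq β] (f : α → β) (w : α → R)
    (b : β) :
    weightedPullback f w (Pi.single b 1) = ∑ a with f a = b, w a • (Pi.single a 1 : α → R) := by
  ext a
  simp [weightedPullback_apply, Finset.sum_apply, Pi.single_apply]

lemma sum_fiber_smul_single_eq_weightedPullback [Fintype α] [DecidableEq β] [DecidableEq γ]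
    [DecidableEq δ] {f : α → β} {p : α → γ} {q : β → δ} {g : γ → δ} {w : α → R} {u : γ → R}
    (hcomm : ∀ a, g (p a) = q (f a)) {b : β}
    (hweight : ∀ c, g c = q b → ∑ a with f a = b ∧ p a = c, w a = u c) :
    ∑ a with f a = b, w a • (Pi.single (p a) 1 : γ → R) =
      weightedPullback g u (Pi.single (q b) 1) := by
  ext c
  have coeff : (∑ a with f a = b, w a • (Pi.single (p a) 1 : γ → R)) c =
      ∑ a with f a = b ∧ p a = c, w a := by
    simp [Finset.sum_apply, Pi.single_apply, ← Finset.filter_filter, Finset.sum_filter, eq_comm]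
  rw [coeff, weightedPullback_apply]
  by_cases hc : g c = q b
  · rw [hweight c hc, hc, Pi.single_eq_same, mul_one]
  · have not_mem_fiber : ∀ a, ¬ (f a = b ∧ p a = c) := by
      rintro a ⟨rfl, rfl⟩
      exact hc (hcomm a)
    simp [not_mem_fiber, hc]

end WeightedPullback

namespace FFMor

variable {Γ₁ Γ₂ : BarGraph} {n : ℕ} (φ : FFMor Γ₁ Γ₂ n)

lemma sum_fiber_bar {M : Type*} [AddCommMonoid M] (e' : Γ₂.E) (f : Γ₁.E → M) :
    ∑ e with φ.eMap e = Γ₂.bar e', f e = ∑ e with φ.eMap e = e', f (Γ₁.bar e) := by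
  refine Finset.sum_nbij' Γ₁.bar Γ₁.bar ?_ ?_ ?_ ?_ ?_ <;>
    simp +contextual [φ.bar_comm, Γ₁.bar_bar, Γ₂.bar_bar]

lemma sum_fiber_target (e' : Γ₂.E) (v : Γ₁.V) (hv : φ.vMap v = Γ₂.t e') :
    ∑ e with φ.eMap e = e' ∧ Γ₁.t e = v, φ.eMult e = φ.vMult v := by
  calc ∑ e with φ.eMap e = e' ∧ Γ₁.t e = v, φ.eMult e
    _ = ∑ e with φ.eMap e = e', if Γ₁.t e = v then φ.eMult e else 0 := by
      rw [← Finset.filter_filter, Finset.sum_filter]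
    _ = ∑ e with φ.eMap e = Γ₂.bar e', if Γ₁.s e = v then φ.eMult e else 0 := by
      simp only [φ.sum_fiber_bar, Γ₁.s_bar, φ.eMult_bar]
    _ = ∑ e with φ.eMap e = Γ₂.bar e' ∧ Γ₁.s e = v, φ.eMult e := by
      rw [← Finset.sum_filter, Finset.filter_filter]
    _ = φ.vMult v := φ.sum_fiber_source (Γ₂.bar e') v (hv.trans (Γ₂.s_bar e').symm)

variable (F : Type) [Field F]

/-- The map `T_V : V(Γ₂,F) → V(Γ₁,F)`, `v' ↦ ∑ n_v • v` over the vertices `v` above `v'`, encoded on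
functions as a weighted pullback. -/
def vertexPullback : Γ₂.VVec F →ₗ[F] Γ₁.VVec F :=
  weightedPullback φ.vMap fun v => φ.vMult v

/-- The lift of `T` to the free modules on oriented edges, before imposing `ē = -e`. -/
def freeEdgePullback : (Γ₂.E → F) →ₗ[F] (Γ₁.E → F) :=
  weightedPullback φ.eMap fun e => φ.eMult e

lemma vertexPullback_single (v' : Γ₂.V) :
    φ.vertexPullback F (Pi.single v' 1) =
      ∑ v with φ.vMap v = v', (φ.vMult v : F) • (Pi.single v 1 : Γ₁.VVec F) :=
  weightedPullback_single _ _ v'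

lemma freeEdgePullback_single (e' : Γ₂.E) :
    φ.freeEdgePullback F (Pi.single e' 1) =
      ∑ e with φ.eMap e = e', (φ.eMult e : F) • (Pi.single e 1 : Γ₁.E → F) :=
  weightedPullback_single _ _ e'

lemma rel_le_comap_freeEdgePullback : Γ₂.rel F ≤ (Γ₁.rel F).comap (φ.freeEdgePullback F) := by
  refine Submodule.span_le.mpr ?_
  rintro _ ⟨e', rfl⟩
  rw [SetLike.mem_coe, Submodule.mem_comap, map_add, freeEdgePullback_single,
    freeEdgePullback_single, sum_fiber_bar, ← Finset.sum_add_distrib]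
  refine Submodule.sum_mem _ fun e _ => ?_
  rw [φ.eMult_bar, ← smul_add]
  exact Submodule.smul_mem _ _ (Submodule.subset_span ⟨e, rfl⟩)

/-- The map `T : E(Γ₂,F) → E(Γ₁,F)`, `e' ↦ ∑ n_e • e` over the edges `e` above `e'`. -/
def edgePullback : Γ₂.EVec F →ₗ[F] Γ₁.EVec F :=
  (Γ₂.rel F).mapQ (Γ₁.rel F) (φ.freeEdgePullback F) (φ.rel_le_comap_freeEdgePullback F)

lemma edgePullback_edgeCls (e' : Γ₂.E) :
    φ.edgePullback F (Γ₂.edgeCls F e') =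
      ∑ e with φ.eMap e = e', (φ.eMult e : F) • Γ₁.edgeCls F e := by
  calc φ.edgePullback F (Γ₂.edgeCls F e')
    _ = (Γ₁.rel F).mkQ (φ.freeEdgePullback F (Pi.single e' 1)) := rfl
    _ = ∑ e with φ.eMap e = e', (φ.eMult e : F) • Γ₁.edgeCls F e := by
      simp only [freeEdgePullback_single, map_sum, map_smul, Submodule.mkQ_apply, BarGraph.edgeCls]

lemma d0_comp_freeEdgePullback :
    Γ₁.d0 F ∘ₗ φ.freeEdgePullback F = φ.vertexPullback F ∘ₗ Γ₂.d0 F := by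
  refine (Pi.basisFun F Γ₂.E).ext fun e' => ?_
  have source : ∑ e with φ.eMap e = e', (φ.eMult e : F) • (Pi.single (Γ₁.s e) 1 : Γ₁.VVec F) =
      φ.vertexPullback F (Pi.single (Γ₂.s e') 1) :=
    sum_fiber_smul_single_eq_weightedPullback φ.s_comm fun v hv =>
      mod_cast congrArg (Nat.cast : ℕ → F) (φ.sum_fiber_source e' v hv)
  have target : ∑ e with φ.eMap e = e', (φ.eMult e : F) • (Pi.single (Γ₁.t e) 1 : Γ₁.VVec F) =
      φ.vertexPullback F (Pi.single (Γ₂.t e') 1) :=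
    sum_fiber_smul_single_eq_weightedPullback φ.t_comm fun v hv =>
      mod_cast congrArg (Nat.cast : ℕ → F) (φ.sum_fiber_target e' v hv)
  simp only [Pi.basisFun_apply, LinearMap.comp_apply, freeEdgePullback_single, map_sum, map_smul,
    BarGraph.d0_single, smul_sub, Finset.sum_sub_distrib, map_sub, source, target]

theorem dMap_comp_edgePullback :
    Γ₁.dMap F ∘ₗ φ.edgePullback F = φ.vertexPullback F ∘ₗ Γ₂.dMap F :=
  Submodule.linearMap_qext _ (φ.d0_comp_freeEdgePullback F)

theorem ker_dMap_le_comap_edgePullback :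
    LinearMap.ker (Γ₂.dMap F) ≤ (LinearMap.ker (Γ₁.dMap F)).comap (φ.edgePullback F) := by
  rw [← LinearMap.ker_comp, dMap_comp_edgePullback]
  exact LinearMap.ker_le_ker_comp _ _

end FFMor

/-- the `F`-linear maps `T_V : V(Γ₂,F) → V(Γ₁,F)`,
`T_V(v') = ∑_{v ∈ φ_V⁻¹(v')} n_v • v`, and `T : E(Γ₂,F) → E(Γ₁,F)`,
`T(e') = ∑_{e ∈ φ_E⁻¹(e')} n_e • e` (well defined), satisfy `d ∘ T = T_V ∘ d`;
consequently `T` maps `H_1(Γ₂,F) = Ker d` into `H_1(Γ₁,F)`, defining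
`φ^* : H_1(Γ₂,F) → H_1(Γ₁,F)`. -/
theorem statement8 (Γ₁ Γ₂ : BarGraph) (n : ℕ) (φ : FFMor Γ₁ Γ₂ n) (F : Type) [Field F] :
    ∃ (TV : Γ₂.VVec F →ₗ[F] Γ₁.VVec F) (T : Γ₂.EVec F →ₗ[F] Γ₁.EVec F),
      (∀ v' : Γ₂.V, TV (Pi.single v' 1) =
        ∑ v ∈ Finset.univ.filter (fun v => φ.vMap v = v'),
          (φ.vMult v : F) • (Pi.single v 1 : Γ₁.VVec F)) ∧
      (∀ e' : Γ₂.E, T (Γ₂.edgeCls F e') =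
        ∑ e ∈ Finset.univ.filter (fun e => φ.eMap e = e'),
          (φ.eMult e : F) • Γ₁.edgeCls F e) ∧
      Γ₁.dMap F ∘ₗ T = TV ∘ₗ Γ₂.dMap F ∧
      (∀ x ∈ LinearMap.ker (Γ₂.dMap F), T x ∈ LinearMap.ker (Γ₁.dMap F)) :=
  ⟨φ.vertexPullback F, φ.edgePullback F, φ.vertexPullback_single F, φ.edgePullback_edgeCls F,
    φ.dMap_comp_edgePullback F, φ.ker_dMap_le_comap_edgePullback F⟩
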